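/- arXiv:2307.07809 — 2 statements merged into one kernel-verified Lean document; each statement's English description precedes it below -/
import Mathlib

section
/- Let G be the hosohedral-type group associated to pairs (m_1,ℓ_1),…,(m_h,ℓ_h) and let Δ be the common image of the s_j(0,ℓ_j). If α, β ∈ G satisfy α^n = β^n for some nonzero integer n, then either α and β are conjugate in G, or α and β are both periodic elements of G that are not conjugate (where an element x ∈ G is periodic if x^a = Δ^b for some nonzero integer a and some integer b). -/
/-- The word `a_{j,i} a_{j,i+1} ⋯ a_{j,i+p-1}` (second indices mod `m j`) in the free group
on the disjoint union of the `ZMod (m j)`. -/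
def hosoWord (h : ℕ) (m : Fin h → ℕ) (j : Fin h) (i : ZMod (m j)) (p : ℕ) :
    FreeGroup (Σ j : Fin h, ZMod (m j)) :=
  ((List.range p).map (fun k => FreeGroup.of ⟨j, i + (k : ZMod (m j))⟩)).prod

/-- The defining relations of the hosohedral-type group associated to the pairs
`(m j, ℓ j)`: the circular relations `s_j(i, ℓ j) = s_j(i+1, ℓ j)` within each factor,
together with the identifications `s_j(0, ℓ j) = s_j'(0, ℓ j')` of the Garside elements. -/
def hosoRels (h : ℕ) (m ℓ : Fin h → ℕ) : Set (FreeGroup (Σ j : Fin h, ZMod (m j))) :=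
  { r | (∃ (j : Fin h) (i : ZMod (m j)),
          r = hosoWord h m j i (ℓ j) * (hosoWord h m j (i + 1) (ℓ j))⁻¹) ∨
        (∃ j j' : Fin h, r = hosoWord h m j 0 (ℓ j) * (hosoWord h m j' 0 (ℓ j'))⁻¹) }

/-- The hosohedral-type group associated to the pairs `(m j, ℓ j)`. -/
abbrev HosoGroup (h : ℕ) (m ℓ : Fin h → ℕ) := PresentedGroup (hosoRels h m ℓ)

/-- The generator `a_{j,i}` of the hosohedral-type group. -/
def hosoGen (h : ℕ) (m ℓ : Fin h → ℕ) (j : Fin h) (i : ZMod (m j)) : HosoGroup h m ℓ :=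
  PresentedGroup.of ⟨j, i⟩

/-- The element `s_j(i,p) = a_{j,i} a_{j,i+1} ⋯ a_{j,i+p-1}` of the hosohedral-type group. -/
def hosoS (h : ℕ) (m ℓ : Fin h → ℕ) (j : Fin h) (i : ZMod (m j)) (p : ℕ) :
    HosoGroup h m ℓ :=
  ((List.range p).map (fun k => hosoGen h m ℓ j (i + (k : ZMod (m j))))).prod

/-- The Garside element `Δ` of the hosohedral-type group, as the image of `s_j(0, ℓ j)`
(this is independent of `j` by the defining relations). -/
def hosoDelta (h : ℕ) (m ℓ : Fin h → ℕ) (j : Fin h) : HosoGroup h m ℓ :=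
  hosoS h m ℓ j 0 (ℓ j)

/-- The `j`-th factor subgroup of the hosohedral-type group, generated by the
generators `a_{j,0}, …, a_{j, m_j - 1}`. -/
def hosoFactor (h : ℕ) (m ℓ : Fin h → ℕ) (j : Fin h) : Subgroup (HosoGroup h m ℓ) :=
  Subgroup.closure (Set.range (hosoGen h m ℓ j))

/-- An element `x` of a hosohedral-type group is *periodic* if `x^a = Δ^b` for some nonzero
integer `a` and some integer `b`. -/
def HosoIsPeriodic (h : ℕ) (m ℓ : Fin h → ℕ) (hh : 0 < h) (x : HosoGroup h m ℓ) : Prop :=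
  ∃ a : ℤ, a ≠ 0 ∧ ∃ b : ℤ, x ^ a = (hosoDelta h m ℓ ⟨0, hh⟩) ^ b

open SemidirectProduct

/-! ### Commuting elements of free groups -/

/-- Two commuting elements of a free group are powers of a common element. -/
theorem FreeGroup.exists_zpow_of_commute {X : Type*} {t w : FreeGroup X} (h : Commute t w) :
    ∃ (c : FreeGroup X) (i r : ℤ), t = c ^ i ∧ w = c ^ r := by
  let H : Subgroup (FreeGroup X) := Subgroup.closure {t, w}
  have hcomm : ∀ x ∈ ({t, w} : Set (FreeGroup X)), ∀ y ∈ ({t, w} : Set (FreeGroup X)),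
      x * y = y * x := by
    rintro x (rfl | rfl) y (rfl | rfl)
    exacts [rfl, h, h.symm, rfl]
  have hH : ∀ x y : H, x * y = y * x :=
    fun x y => (Subgroup.isMulCommutative_closure hcomm).is_comm.comm x y
  let e := IsFreeGroup.mulEquiv H
  have hsub : Subsingleton (IsFreeGroup.Generators H) := by
    refine ⟨fun x y => ?_⟩
    by_contra hxy
    have hc : FreeGroup.of x * FreeGroup.of y = FreeGroup.of y * FreeGroup.of x := by
      apply e.injective
      rw [_root_.map_mul, _root_.map_mul, hH]
    classical
    have := congrArg FreeGroup.toWord hc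
    simp [FreeGroup.toWord_mul, FreeGroup.reduce.cons, hxy, Ne.symm hxy] at this
  have hcyc : IsCyclic (FreeGroup (IsFreeGroup.Generators H)) := by
    rcases isEmpty_or_nonempty (IsFreeGroup.Generators H) with h0 | ⟨⟨x⟩⟩
    · infer_instance
    · have : Unique (IsFreeGroup.Generators H) := ⟨⟨x⟩, fun y => Subsingleton.elim _ _⟩
      infer_instance
  obtain ⟨c, hc⟩ := hcyc.exists_generator
  have key : ∀ g ∈ H, ∃ i : ℤ, g = (e c : FreeGroup X) ^ i := by
    intro g hg
    obtain ⟨i, hi⟩ := hc (e.symm ⟨g, hg⟩)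
    refine ⟨i, ?_⟩
    have := congrArg (fun z => (e z : FreeGroup X)) hi
    simpa using this.symm
  obtain ⟨i, hi⟩ := key t (Subgroup.subset_closure (by simp))
  obtain ⟨r, hr⟩ := key w (Subgroup.subset_closure (by simp))
  exact ⟨_, i, r, hi, hr⟩

/-- Roots in an extension of a torsion-free abelian group by a free group are unique among
elements centralizing a common nontrivial element of the free group. -/
theorem SemidirectProduct.eq_of_zpow_eq_of_commute {X Q : Type*} [CommGroup Q] [IsMulTorsionFree Q]
    {φ : Q →* MulAut (FreeGroup X)} {a b : FreeGroup X ⋊[φ] Q} {n : ℤ} (hn : n ≠ 0)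
    (hab : a ^ n = b ^ n) {w : FreeGroup X} (hw : w ≠ 1)
    (ha : Commute a (inl w)) (hb : Commute b (inl w)) : a = b := by
  have hright : a.right = b.right := by
    have := congrArg (rightHom (φ := φ)) hab
    rw [map_zpow, map_zpow] at this
    exact zpow_left_injective hn this
  obtain ⟨t, ht⟩ : ∃ t : FreeGroup X, inl t = a⁻¹ * b := by
    have : a⁻¹ * b ∈ (rightHom (φ := φ)).ker := by
      simp [MonoidHom.mem_ker, rightHom_eq_right, hright]
    rw [← range_inl_eq_ker_rightHom] at this
    exact this
  have htw : Commute t w := by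
    have : Commute (inl t : FreeGroup X ⋊[φ] Q) (inl w) := by
      rw [ht]
      exact ha.inv_left.mul_left hb
    have h2 : inl (t * w) = (inl (w * t) : FreeGroup X ⋊[φ] Q) := by
      rw [map_mul, map_mul]; exact this
    exact inl_injective h2
  obtain ⟨c, i, r, rfl, rfl⟩ := FreeGroup.exists_zpow_of_commute htw
  have hr : r ≠ 0 := by
    rintro rfl
    exact hw (zpow_zero c)
  obtain ⟨t', ht'⟩ : ∃ t' : FreeGroup X, inl t' = a * inl (c ^ i) * a⁻¹ := by
    have : a * inl (c ^ i) * a⁻¹ ∈ (rightHom (φ := φ)).ker := by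
      rw [MonoidHom.mem_ker, map_mul, map_mul, rightHom_inl, map_inv, mul_one, mul_inv_cancel]
    rw [← range_inl_eq_ker_rightHom] at this
    exact this
  have hpow : (c ^ i) ^ r = (c ^ r) ^ i := by rw [← zpow_mul, ← zpow_mul, mul_comm]
  have htt : t' = c ^ i := by
    apply zpow_left_injective hr
    apply inl_injective (φ := φ)
    change inl (t' ^ r) = inl ((c ^ i) ^ r)
    rw [map_zpow, ht', conj_zpow, ← map_zpow, hpow, map_zpow]
    have := ha.zpow_right i
    rw [this.eq, mul_inv_cancel_right]
  have hat : Commute a (inl (c ^ i)) := by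
    rw [htt] at ht'
    exact (eq_mul_inv_iff_mul_eq.1 ht').symm
  have hb' : b = a * inl (c ^ i) := by rw [ht, mul_inv_cancel_left]
  have h1 : (inl ((c ^ i) ^ n) : FreeGroup X ⋊[φ] Q) = inl 1 := by
    rw [hb', hat.mul_zpow, left_eq_mul] at hab
    rw [map_zpow, hab, map_one]
  have h2 : c ^ i = 1 := by
    apply zpow_left_injective hn
    change (c ^ i) ^ n = 1 ^ n
    rw [inl_injective h1, one_zpow]
  rw [hb', h2, map_one, mul_one]

/-! ### A normal form for stars of groups -/

/-- A group acts on the free group over the disjoint union of coset spaces by translating the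
basis. -/
def cosetAut {ι Q : Type*} [CommGroup Q] (C : ι → Subgroup Q) :
    Q →* MulAut (FreeGroup (Σ j, Q ⧸ C j)) where
  toFun q := FreeGroup.freeGroupCongr (MulAction.toPerm q)
  map_one' := by
    ext x
    induction x using FreeGroup.induction_on <;> simp_all
  map_mul' p q := by
    ext x
    induction x using FreeGroup.induction_on <;> simp_all [mul_smul]

theorem cosetAut_of {ι Q : Type*} [CommGroup Q] (C : ι → Subgroup Q) (q p : Q) (j : ι) :
    cosetAut C q (FreeGroup.of ⟨j, (p : Q ⧸ C j)⟩) = FreeGroup.of ⟨j, ((q * p : Q) : Q ⧸ C j)⟩ := by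
  simp [cosetAut]

section Star

variable {ι Q Γ : Type*} [CommGroup Q] [Group Γ] (C : ι → Subgroup Q)

/-- The element `y₁ a₁ y₂ a₂ ⋯` spelled by a list of triples `(jₖ, yₖ, aₖ)`. -/
def syllableProd (l : List (ι × Γ × Γ)) : Γ := (l.map fun s => s.2.1 * s.2.2).prod

/-- The word in the cosets traced out by a list of syllables, starting at `q`. -/
def cosetWord (π : Γ →* Q) : Q → List (ι × Γ × Γ) → List ((Σ j, Q ⧸ C j) × Bool)
  | _, [] => []
  | q, s :: l => (⟨s.1, (q : Q ⧸ C s.1)⟩, true) :: (⟨s.1, ((q * π s.2.1 : Q) : Q ⧸ C s.1)⟩, false) ::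
      cosetWord π (q * π s.2.1 * π s.2.2) l

/-- A list of syllables `(jₖ, yₖ, aₖ)` with `yₖ ∈ X jₖ` and `aₖ ∈ A` is reduced if no `yₖ` lies in
the edge group and no `aₖ` between two syllables of the same type does. -/
structure IsReducedSyllables (π : Γ →* Q) (A : Subgroup Γ) (X : ι → Subgroup Γ)
    (l : List (ι × Γ × Γ)) : Prop where
  mem : ∀ s ∈ l, s.2.1 ∈ X s.1 ∧ s.2.2 ∈ A ∧ π s.2.1 ∉ C s.1
  chain : l.IsChain fun s t => s.1 = t.1 → π s.2.2 ∉ C s.1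

variable {C} {π : Γ →* Q} {A : Subgroup Γ} {X : ι → Subgroup Γ}

theorem isReduced_cosetWord {l : List (ι × Γ × Γ)} (hl : IsReducedSyllables C π A X l) (q : Q) :
    FreeGroup.IsReduced (cosetWord C π q l) := by
  obtain ⟨hmem, hchain⟩ := hl
  induction l generalizing q with
  | nil => simp [cosetWord]
  | cons s l ih =>
    have hs : (q : Q ⧸ C s.1) ≠ ((q * π s.2.1 : Q) : Q ⧸ C s.1) := by
      rw [Ne, QuotientGroup.eq, inv_mul_cancel_left]
      exact (hmem s (by simp)).2.2
    have ih' := ih (q * π s.2.1 * π s.2.2) (fun t ht => hmem t (by simp [ht])) hchain.tail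
    cases l with
    | nil => simpa [cosetWord] using hs
    | cons t l =>
      rw [List.isChain_cons_cons] at hchain
      rw [cosetWord] at ih'
      rw [cosetWord, cosetWord, FreeGroup.isReduced_cons_cons, FreeGroup.isReduced_cons_cons]
      refine ⟨fun h => (hs (by simpa using h)).elim, fun h => ?_, ih'⟩
      obtain ⟨j, y, a⟩ := s
      obtain ⟨j', y', a'⟩ := t
      simp only [Sigma.mk.injEq] at h
      obtain ⟨rfl, h⟩ := h
      rw [heq_eq_eq, QuotientGroup.eq, inv_mul_cancel_left] at h
      exact (hchain.1 rfl h).elim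

/-- In a group generated by `A` and the `X j`, every element has a reduced expression. -/
theorem exists_isReducedSyllables (hgen : Subgroup.closure ((A : Set Γ) ∪ ⋃ j, X j) = ⊤)
    (hXA : ∀ j, ∀ x ∈ X j, π x ∈ C j → x ∈ A) (hAX : ∀ j, ∀ a ∈ A, π a ∈ C j → a ∈ X j) (g : Γ) :
    ∃ a ∈ A, ∃ l : List (ι × Γ × Γ), IsReducedSyllables C π A X l ∧ g = a * syllableProd l := by
  let P : Γ → Prop := fun g =>
    ∃ a ∈ A, ∃ l : List (ι × Γ × Γ), IsReducedSyllables C π A X l ∧ g = a * syllableProd l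
  have hPA : ∀ a ∈ A, ∀ g, P g → P (a * g) := by
    rintro a ha _ ⟨b, hb, l, hl, rfl⟩
    exact ⟨a * b, mul_mem ha hb, l, hl, (mul_assoc _ _ _).symm⟩
  have hPcons : ∀ j, ∀ y ∈ X j, ∀ a ∈ A, ∀ l : List (ι × Γ × Γ), IsReducedSyllables C π A X l →
      (∀ t ∈ l.head?, j = t.1 → π a ∉ C j) → P (y * (a * syllableProd l)) := by
    intro j y hy a ha l hl hd
    by_cases hyC : π y ∈ C j
    · exact hPA y (hXA j y hy hyC) _ ⟨a, ha, l, hl, rfl⟩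
    · refine ⟨1, one_mem _, (j, y, a) :: l, ⟨?_, ?_⟩, ?_⟩
      · intro s hs
        rcases List.mem_cons.1 hs with rfl | hs
        · exact ⟨hy, ha, hyC⟩
        · exact hl.mem s hs
      · exact List.isChain_cons.2 ⟨hd, hl.chain⟩
      · simp [syllableProd, mul_assoc]
  have hPX : ∀ j, ∀ y ∈ X j, ∀ g, P g → P (y * g) := by
    rintro j y hy _ ⟨a, ha, l, hl, rfl⟩
    by_cases hd : ∀ t ∈ l.head?, j = t.1 → π a ∉ C j
    · exact hPcons j y hy a ha l hl hd
    · push Not at hd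
      obtain ⟨⟨_, z, b⟩, ht, rfl, haC⟩ := hd
      cases l with
      | nil => simp at ht
      | cons s l =>
        simp only [List.head?_cons, Option.mem_def, Option.some.injEq] at ht
        subst ht
        obtain ⟨hz, hb, -⟩ := hl.mem _ List.mem_cons_self
        have hc := List.isChain_cons.1 hl.chain
        have := hPcons _ (y * a * z) (mul_mem (mul_mem hy (hAX _ a ha haC)) hz) b hb l
          ⟨fun s hs => hl.mem s (List.mem_cons_of_mem _ hs), hc.2⟩ hc.1
        simpa [syllableProd, mul_assoc] using this
  have hg : g ∈ Subgroup.closure ((A : Set Γ) ∪ ⋃ j, X j) := hgen ▸ Subgroup.mem_top g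
  have hmul : ∀ x ∈ (A : Set Γ) ∪ ⋃ j, (X j : Set Γ), ∀ g, P g → P (x * g) := by
    rintro x (hx | hx)
    · exact hPA x hx
    · obtain ⟨j, hj⟩ := Set.mem_iUnion.1 hx
      exact hPX j x hj
  induction hg using Subgroup.closure_induction_left with
  | one => exact ⟨1, one_mem _, [], ⟨by simp, by simp⟩, by simp [syllableProd]⟩
  | mul_left x hx y _ ih => exact hmul x hx y ih
  | inv_mul_cancel x hx y _ ih =>
    refine hmul x⁻¹ ?_ y ih
    rcases hx with hx | hx
    · exact Or.inl (A.inv_mem hx)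
    · obtain ⟨j, hj⟩ := Set.mem_iUnion.1 hx
      exact Or.inr (Set.mem_iUnion.2 ⟨j, (X j).inv_mem hj⟩)

/-- A homomorphism from a group generated by `A` and the `X j` to the semidirect product of an
abelian group with the free group over the cosets of the edge groups is injective as soon as it
is compatible with the star-shaped amalgam structure. -/
theorem injective_of_star (Ψ : Γ →* FreeGroup (Σ j, Q ⧸ C j) ⋊[cosetAut C] Q)
    (hπ : ∀ g, π g = (Ψ g).right)
    (hgen : Subgroup.closure ((A : Set Γ) ∪ ⋃ j, X j) = ⊤)
    (hA : ∀ a ∈ A, Ψ a = inr (π a))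
    (hX : ∀ j, ∀ x ∈ X j, Ψ x = inl (FreeGroup.of ⟨j, ((1 : Q) : Q ⧸ C j)⟩) * inr (π x) *
      (inl (FreeGroup.of ⟨j, ((1 : Q) : Q ⧸ C j)⟩))⁻¹)
    (hXA : ∀ j, ∀ x ∈ X j, π x ∈ C j → x ∈ A) (hAX : ∀ j, ∀ a ∈ A, π a ∈ C j → a ∈ X j)
    (hA1 : ∀ a ∈ A, π a = 1 → a = 1) : Function.Injective Ψ := by
  have hword : ∀ l : List (ι × Γ × Γ), IsReducedSyllables C π A X l → ∀ q : Q, ∃ q' : Q,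
      inr q * Ψ (syllableProd l) = inl (FreeGroup.mk (cosetWord C π q l)) * inr q' := by
    rintro l ⟨hmem, -⟩
    induction l with
    | nil => exact fun q => ⟨q, by simp [syllableProd, cosetWord, ← FreeGroup.one_eq_mk]⟩
    | cons s l ih =>
      intro q
      obtain ⟨q', hq'⟩ := ih (fun t ht => hmem t (by simp [ht])) (q * π s.2.1 * π s.2.2)
      refine ⟨q', ?_⟩
      obtain ⟨j, y, a⟩ := s
      obtain ⟨hy, ha, -⟩ := hmem _ List.mem_cons_self
      have hmove : ∀ p : Q, (inr p * inl (FreeGroup.of ⟨j, ((1 : Q) : Q ⧸ C j)⟩) :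
          FreeGroup (Σ j, Q ⧸ C j) ⋊[cosetAut C] Q) =
          inl (FreeGroup.of ⟨j, (p : Q ⧸ C j)⟩) * inr p := by
        intro p
        have := inl_aut (φ := cosetAut C) p (FreeGroup.of ⟨j, ((1 : Q) : Q ⧸ C j)⟩)
        rw [cosetAut_of, mul_one] at this
        rw [this, map_inv, inv_mul_cancel_right]
      have hmove' : ∀ p : Q, (inr p * (inl (FreeGroup.of ⟨j, ((1 : Q) : Q ⧸ C j)⟩))⁻¹ :
          FreeGroup (Σ j, Q ⧸ C j) ⋊[cosetAut C] Q) =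
          (inl (FreeGroup.of ⟨j, (p : Q ⧸ C j)⟩))⁻¹ * inr p := by
        intro p
        rw [mul_inv_eq_iff_eq_mul, mul_assoc, hmove, inv_mul_cancel_left]
      have hsplit : syllableProd ((j, y, a) :: l) = y * a * syllableProd l := by
        simp [syllableProd]
      have hmk : FreeGroup.mk (cosetWord C π q ((j, y, a) :: l)) =
          FreeGroup.of ⟨j, (q : Q ⧸ C j)⟩ * (FreeGroup.of ⟨j, ((q * π y : Q) : Q ⧸ C j)⟩)⁻¹ *
            FreeGroup.mk (cosetWord C π (q * π y * π a) l) := by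
        simp [cosetWord, FreeGroup.of, FreeGroup.invRev]
      have hy' : (inr q * (inl (FreeGroup.of ⟨j, ((1 : Q) : Q ⧸ C j)⟩) * inr (π y) *
          (inl (FreeGroup.of ⟨j, ((1 : Q) : Q ⧸ C j)⟩))⁻¹) :
          FreeGroup (Σ j, Q ⧸ C j) ⋊[cosetAut C] Q) = inl (FreeGroup.of ⟨j, (q : Q ⧸ C j)⟩) *
          (inl (FreeGroup.of ⟨j, ((q * π y : Q) : Q ⧸ C j)⟩))⁻¹ * inr (q * π y) := by
        simp only [← mul_assoc]
        rw [hmove, mul_assoc _ (inr q), ← map_mul inr, mul_assoc _ (inr (q * π y)), hmove',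
          ← mul_assoc]
      rw [hsplit, hmk, map_mul Ψ, map_mul Ψ, hX j y hy, hA a ha, map_mul inl, map_mul inl,
        map_inv inl, ← mul_assoc, ← mul_assoc, hy', mul_assoc (_ * _) (inl _) (inr q')]
      change _ = _ * _ * (inl (FreeGroup.mk (cosetWord C π (q * π (j, y, a).2.1 *
        π (j, y, a).2.2) l)) * inr q')
      rw [← hq', map_mul inr (q * _)]
      simp only [mul_assoc]
  rw [injective_iff_map_eq_one]
  intro g hg
  obtain ⟨a, ha, l, hl, rfl⟩ := exists_isReducedSyllables hgen hXA hAX g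
  obtain ⟨q', hq'⟩ := hword l hl (π a)
  rw [← hA a ha, ← map_mul, hg] at hq'
  have hone : FreeGroup.mk (cosetWord C π (π a) l) = 1 := by
    have := congrArg SemidirectProduct.left hq'
    simpa using this.symm
  have hnil : cosetWord C π (π a) l = [] := by
    classical
    have := congrArg FreeGroup.toWord hone
    rwa [FreeGroup.toWord_mk, (isReduced_cosetWord hl (π a)).reduce_eq, FreeGroup.toWord_one] at this
  cases l with
  | cons s l => simp [cosetWord] at hnil
  | nil =>
    have ha1 : a = 1 := hA1 a ha (by
      have : Ψ a = 1 := by simpa [syllableProd] using hg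
      rw [hπ, this, one_right])
    simp [ha1, syllableProd]

end Star

/-! ### Products of conjugates -/

section Group

variable {Γ : Type*} [Group Γ]

/-- The subgroup `{x ^ p * y ^ q}` generated by two commuting elements. -/
def Subgroup.zpowPair (x y : Γ) (h : Commute x y) : Subgroup Γ where
  carrier := {g | ∃ p q : ℤ, g = x ^ p * y ^ q}
  one_mem' := ⟨0, 0, by simp⟩
  mul_mem' := by
    rintro _ _ ⟨p, q, rfl⟩ ⟨p', q', rfl⟩
    refine ⟨p + p', q + q', ?_⟩
    rw [zpow_add, zpow_add, mul_assoc, ← mul_assoc (y ^ q), ((h.zpow_zpow p' q).symm).eq]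
    simp only [mul_assoc]
  inv_mem' := by
    rintro _ ⟨p, q, rfl⟩
    exact ⟨-p, -q, by rw [mul_inv_rev, zpow_neg, zpow_neg, ((h.zpow_zpow p q).inv_inv).eq]⟩

theorem prod_map_range_conj (r x : Γ) (c : ℤ) (p : ℕ) :
    ((List.range p).map fun k : ℕ => r ^ (c + k) * x * r ^ (-1 - (c + k))).prod =
      r ^ c * x ^ p * r ^ (-(c + p)) := by
  induction p with
  | zero => simp
  | succ p ih =>
    rw [List.range_succ, List.map_append, List.prod_append, ih]
    simp only [List.map_cons, List.map_nil, List.prod_cons, List.prod_nil, mul_one]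
    rw [← mul_assoc, ← mul_assoc, mul_assoc _ (r ^ (-(c + (p : ℤ)))), ← zpow_add, neg_add_cancel,
      zpow_zero, mul_one, mul_assoc _ (x ^ p), ← pow_succ]
    congr 2
    push_cast
    ring

theorem conj_zpow_eq_of_zmod_eq {r x : Γ} {n : ℕ} (h : Commute (r ^ n) x) {c d : ℤ}
    (hcd : (c : ZMod n) = d) :
    r ^ c * x * r ^ (-1 - c) = r ^ d * x * r ^ (-1 - d) := by
  obtain ⟨k, hk⟩ := (ZMod.intCast_eq_intCast_iff_dvd_sub c d n).1 hcd
  obtain rfl : d = c + n * k := by lia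
  have hx : r ^ ((n : ℤ) * k) * x = x * r ^ ((n : ℤ) * k) := by
    rw [zpow_mul, zpow_natCast]
    exact (h.zpow_left k).eq
  rw [zpow_add, mul_assoc (r ^ c) _ x, hx, ← mul_assoc, mul_assoc _ (r ^ ((n : ℤ) * k)), ← zpow_add]
  congr 2
  ring

end Group

/-! ### The hosohedral-type group and its extension by the shift -/

section Hoso

variable {h : ℕ} {m ℓ : Fin h → ℕ}

/-- The universal property of the hosohedral-type group. -/
def hosoLift {Γ : Type*} [Group Γ] (f : (Σ j : Fin h, ZMod (m j)) → Γ)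
    (hf : ∀ j i j' i', ((List.range (ℓ j)).map fun k : ℕ => f ⟨j, i + (k : ZMod (m j))⟩).prod =
      ((List.range (ℓ j')).map fun k : ℕ => f ⟨j', i' + (k : ZMod (m j'))⟩).prod) :
    HosoGroup h m ℓ →* Γ :=
  PresentedGroup.toGroup (f := f) <| by
    have hw : ∀ j i, FreeGroup.lift f (hosoWord h m j i (ℓ j)) =
        ((List.range (ℓ j)).map fun k : ℕ => f ⟨j, i + (k : ZMod (m j))⟩).prod := by
      intro j i
      simp [hosoWord, map_list_prod, Function.comp_def]
    rintro r (⟨j, i, rfl⟩ | ⟨j, j', rfl⟩)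
    · rw [map_mul, map_inv, hw, hw, hf j i j (i + 1), mul_inv_cancel]
    · rw [map_mul, map_inv, hw, hw, hf j 0 j' 0, mul_inv_cancel]

theorem hosoLift_gen {Γ : Type*} [Group Γ] (f : (Σ j : Fin h, ZMod (m j)) → Γ)
    (hf : ∀ j i j' i', ((List.range (ℓ j)).map fun k : ℕ => f ⟨j, i + (k : ZMod (m j))⟩).prod =
      ((List.range (ℓ j')).map fun k : ℕ => f ⟨j', i' + (k : ZMod (m j'))⟩).prod)
    (j : Fin h) (i : ZMod (m j)) :
    hosoLift (ℓ := ℓ) f hf (hosoGen h m ℓ j i) = f ⟨j, i⟩ :=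
  PresentedGroup.toGroup.of _

theorem hosoGroup_hom_ext {Γ : Type*} [Group Γ] {f g : HosoGroup h m ℓ →* Γ}
    (hfg : ∀ j i, f (hosoGen h m ℓ j i) = g (hosoGen h m ℓ j i)) : f = g :=
  PresentedGroup.ext fun x => hfg x.1 x.2

theorem hosoS_eq_prod (j : Fin h) (i : ZMod (m j)) (p : ℕ) :
    hosoS h m ℓ j i p =
      ((List.range p).map fun k : ℕ => hosoGen h m ℓ j (i + (k : ZMod (m j)))).prod := by
  rw [← List.flatMap_pure_eq_map]
  simp only [hosoS, List.bind_eq_flatMap, List.map_flatMap]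
  rfl

theorem hosoS_eq_hosoDelta (hm : ∀ j, 0 < m j) (j : Fin h) (i : ZMod (m j)) (j' : Fin h) :
    hosoS h m ℓ j i (ℓ j) = hosoDelta h m ℓ j' := by
  have hmk : ∀ j i, PresentedGroup.mk (hosoRels h m ℓ) (hosoWord h m j i (ℓ j)) =
      hosoS h m ℓ j i (ℓ j) := by
    intro j i
    rw [hosoWord, hosoS_eq_prod, map_list_prod, List.map_map]
    rfl
  have hsucc : ∀ j i, hosoS h m ℓ j i (ℓ j) = hosoS h m ℓ j (i + 1) (ℓ j) := by
    intro j i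
    rw [← hmk, ← hmk]
    exact PresentedGroup.mk_eq_mk_of_mul_inv_mem (Or.inl ⟨j, i, rfl⟩)
  have hzero : hosoS h m ℓ j 0 (ℓ j) = hosoDelta h m ℓ j' := by
    rw [hosoDelta, ← hmk, ← hmk]
    exact PresentedGroup.mk_eq_mk_of_mul_inv_mem (Or.inr ⟨j, j', rfl⟩)
  have : NeZero (m j) := ⟨(hm j).ne'⟩
  have hnat : ∀ k : ℕ, hosoS h m ℓ j k (ℓ j) = hosoDelta h m ℓ j' := by
    intro k
    induction k with
    | zero => simpa using hzero
    | succ k ih => rw [← ih, hsucc j k, Nat.cast_succ]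
  simpa using hnat i.val

/-- The endomorphism of the hosohedral-type group translating all second indices by `c`. -/
def hosoShift (hm : ∀ j, 0 < m j) (c : ℤ) : HosoGroup h m ℓ →* HosoGroup h m ℓ :=
  hosoLift (fun x => hosoGen h m ℓ x.1 (x.2 + (c : ZMod (m x.1)))) <| by
    have hs : ∀ j (i : ZMod (m j)), ((List.range (ℓ j)).map fun k : ℕ =>
        hosoGen h m ℓ j (i + (k : ZMod (m j)) + (c : ZMod (m j)))).prod =
          hosoS h m ℓ j (i + c) (ℓ j) := by
      intro j i
      simp only [hosoS_eq_prod, add_right_comm _ (c : ZMod (m j))]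
    intro j i j' i'
    simp only [hs]
    rw [hosoS_eq_hosoDelta hm j _ j, hosoS_eq_hosoDelta hm j' _ j]

theorem hosoShift_gen (hm : ∀ j, 0 < m j) (c : ℤ) (j : Fin h) (i : ZMod (m j)) :
    hosoShift hm c (hosoGen h m ℓ j i) = hosoGen h m ℓ j (i + (c : ZMod (m j))) :=
  hosoLift_gen _ _ j i

theorem hosoShift_zero (hm : ∀ j, 0 < m j) :
    hosoShift (ℓ := ℓ) hm 0 = MonoidHom.id (HosoGroup h m ℓ) :=
  hosoGroup_hom_ext fun j i => by simp [hosoShift_gen]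

theorem hosoShift_add (hm : ∀ j, 0 < m j) (c d : ℤ) :
    hosoShift (ℓ := ℓ) hm (c + d) = (hosoShift hm c).comp (hosoShift hm d) :=
  hosoGroup_hom_ext fun j i => by
    simp only [MonoidHom.comp_apply, hosoShift_gen, Int.cast_add]
    congr 1
    ring

theorem hosoShift_hosoDelta (hm : ∀ j, 0 < m j) (c : ℤ) (j : Fin h) :
    hosoShift hm c (hosoDelta h m ℓ j) = hosoDelta h m ℓ j := by
  refine Eq.trans ?_ (hosoS_eq_hosoDelta hm j c j)
  simp only [hosoDelta, hosoS_eq_prod, map_list_prod, List.map_map, Function.comp_def,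
    hosoShift_gen, zero_add, add_comm (c : ZMod (m j))]

/-- The infinite cyclic group acting on the hosohedral-type group by shifts. -/
def hosoShiftAut (hm : ∀ j, 0 < m j) : Multiplicative ℤ →* MulAut (HosoGroup h m ℓ) where
  toFun c := MonoidHom.toMulEquiv (hosoShift hm c.toAdd) (hosoShift hm (-c.toAdd))
    (by rw [← hosoShift_add, neg_add_cancel, hosoShift_zero])
    (by rw [← hosoShift_add, add_neg_cancel, hosoShift_zero])
  map_one' := by
    ext x
    exact DFunLike.congr_fun (hosoShift_zero hm) x
  map_mul' c d := by
    ext x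
    exact DFunLike.congr_fun (hosoShift_add hm c.toAdd d.toAdd) x

theorem hosoShiftAut_apply (hm : ∀ j, 0 < m j) (c : Multiplicative ℤ) (x : HosoGroup h m ℓ) :
    hosoShiftAut hm c x = hosoShift hm c.toAdd x := rfl

/-- The extension of the hosohedral-type group by the shift. -/
abbrev HosoExt (ℓ : Fin h → ℕ) (hm : ∀ j, 0 < m j) :=
  HosoGroup h m ℓ ⋊[hosoShiftAut hm] Multiplicative ℤ

/-- The shift, as an element of the extension. -/
def extRho (ℓ : Fin h → ℕ) (hm : ∀ j, 0 < m j) : HosoExt ℓ hm := inr (Multiplicative.ofAdd 1)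

/-- The element `a_{j,0} ρ` of the extension, an `ℓ j`-th root of `Δ ρ ^ ℓ j`. -/
def extX (ℓ : Fin h → ℕ) (hm : ∀ j, 0 < m j) (j : Fin h) : HosoExt ℓ hm :=
  inl (hosoGen h m ℓ j 0) * extRho ℓ hm

theorem extRho_zpow (hm : ∀ j, 0 < m j) (c : ℤ) :
    extRho ℓ hm ^ c = inr (Multiplicative.ofAdd c) := by
  rw [extRho, ← map_zpow, ← ofAdd_zsmul, smul_eq_mul, mul_one]

theorem inl_hosoGen (hm : ∀ j, 0 < m j) (j : Fin h) (c : ℤ) :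
    (inl (hosoGen h m ℓ j c) : HosoExt ℓ hm) =
      extRho ℓ hm ^ c * extX ℓ hm j * extRho ℓ hm ^ (-1 - c) := by
  have h1 := inl_aut (φ := hosoShiftAut hm) (Multiplicative.ofAdd c) (hosoGen h m ℓ j 0)
  rw [hosoShiftAut_apply, hosoShift_gen, zero_add, toAdd_ofAdd, map_inv, ← extRho_zpow hm] at h1
  rw [h1, extX, sub_eq_add_neg, zpow_add, zpow_neg_one, zpow_neg]
  group

theorem commute_extRho_hosoDelta (hm : ∀ j, 0 < m j) (j : Fin h) :
    Commute (extRho ℓ hm) (inl (hosoDelta h m ℓ j)) := by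
  have h1 := inl_aut (φ := hosoShiftAut hm) (Multiplicative.ofAdd 1) (hosoDelta h m ℓ j)
  rw [hosoShiftAut_apply, hosoShift_hosoDelta, map_inv] at h1
  exact (eq_mul_inv_iff_mul_eq.1 h1).symm

theorem commute_extRho_pow_extX (hm : ∀ j, 0 < m j) (j : Fin h) :
    Commute (extRho ℓ hm ^ m j) (extX ℓ hm j) := by
  have h1 := inl_hosoGen (ℓ := ℓ) hm j (m j : ℤ)
  have h2 := inl_hosoGen (ℓ := ℓ) hm j 0
  rw [Int.cast_natCast, ZMod.natCast_self] at h1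
  rw [Int.cast_zero, h1, zpow_sub, zpow_sub, ← mul_assoc, ← mul_assoc] at h2
  simp only [zpow_natCast, zpow_zero, one_mul, inv_one, mul_one] at h2
  have h3 := mul_inv_eq_iff_eq_mul.1 h2
  have hc : Commute (extRho ℓ hm ^ (-1 : ℤ)) (extRho ℓ hm ^ m j) := by
    rw [← zpow_natCast]; exact Commute.zpow_zpow_self _ _ _
  rw [mul_assoc (extX ℓ hm j), hc.eq, ← mul_assoc] at h3
  exact mul_right_cancel h3

theorem extX_pow (hm : ∀ j, 0 < m j) (j j' : Fin h) :
    extX ℓ hm j ^ ℓ j = inl (hosoDelta h m ℓ j') * extRho ℓ hm ^ (ℓ j : ℤ) := by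
  rw [← hosoS_eq_hosoDelta hm j 0 j', hosoS_eq_prod, map_list_prod, List.map_map]
  have : (inl ∘ fun k : ℕ => hosoGen h m ℓ j (0 + (k : ZMod (m j))) : ℕ → HosoExt ℓ hm) =
      fun k : ℕ => extRho ℓ hm ^ ((0 : ℤ) + k) * extX ℓ hm j * extRho ℓ hm ^ (-1 - ((0 : ℤ) + k)) := by
    funext k
    rw [← inl_hosoGen]
    simp
  rw [this, prod_map_range_conj]
  simp

/-- The powers `Δ ^ N` with `N` a common multiple of the `m j` are central. -/
theorem commute_hosoDelta_pow (hm : ∀ j, 0 < m j) (j' : Fin h) {N : ℕ} (hN : ∀ j, m j ∣ N)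
    (x : HosoGroup h m ℓ) : Commute (hosoDelta h m ℓ j' ^ N) x := by
  have hX : ∀ j, Commute (extX ℓ hm j) (inl (hosoDelta h m ℓ j') ^ N) := by
    intro j
    obtain ⟨k, hk⟩ := hN j
    have h1 : Commute (extX ℓ hm j) ((inl (hosoDelta h m ℓ j') * extRho ℓ hm ^ (ℓ j : ℤ)) ^ N) := by
      rw [← extX_pow hm j j']
      exact ((Commute.refl _).pow_right _).pow_right _
    have hρ : Commute (extX ℓ hm j) ((extRho ℓ hm ^ (ℓ j : ℤ)) ^ N) := by
      rw [zpow_natCast, pow_right_comm, hk, pow_mul]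
      exact (((commute_extRho_pow_extX hm j).symm.pow_right _).pow_right _)
    rw [((commute_extRho_hosoDelta hm j').symm.zpow_right (ℓ j)).mul_pow] at h1
    simpa using h1.mul_right hρ.inv_right
  have hgen : ∀ j i, Commute (hosoGen h m ℓ j i) (hosoDelta h m ℓ j' ^ N) := by
    intro j i
    have : NeZero (m j) := ⟨(hm j).ne'⟩
    have hρ := (commute_extRho_hosoDelta (ℓ := ℓ) hm j').pow_right N
    have h1 := ((hρ.zpow_left (i.val : ℤ)).mul_left (hX j)).mul_left (hρ.zpow_left (-1 - i.val : ℤ))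
    rw [← inl_hosoGen, ← map_pow] at h1
    have h2 := h1.eq
    rw [← map_mul, ← map_mul] at h2
    have h3 := inl_injective h2
    rwa [Int.cast_natCast, ZMod.natCast_zmod_val] at h3
  have := PresentedGroup.generated_by (hosoRels h m ℓ)
    (Subgroup.centralizer {hosoDelta h m ℓ j' ^ N}) (fun y => by
      rw [Subgroup.mem_centralizer_singleton_iff]
      exact (hgen y.1 y.2)) x
  rw [Subgroup.mem_centralizer_singleton_iff] at this
  exact this.symm

/-! ### Embedding the extension in a free-by-abelian group -/

/-- The subgroup of `ℤ × ℚ` of the images of the edge group of the `j`-th factor. -/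
def hosoEdge (m ℓ : Fin h → ℕ) (j : Fin h) : Subgroup (Multiplicative (ℤ × ℚ)) where
  carrier := {q | ∃ s : ℤ, q.toAdd.2 = s ∧ (m j : ℤ) ∣ q.toAdd.1 - s * ℓ j}
  one_mem' := ⟨0, by simp⟩
  mul_mem' := by
    rintro a b ⟨s, hs, hs'⟩ ⟨t, ht, ht'⟩
    refine ⟨s + t, by simp [hs, ht], ?_⟩
    have hsum : (a * b).toAdd.1 - (s + t) * ℓ j =
        (a.toAdd.1 - s * ℓ j) + (b.toAdd.1 - t * ℓ j) := by
      rw [toAdd_mul, Prod.fst_add]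
      ring
    exact hsum ▸ dvd_add hs' ht'
  inv_mem' := by
    rintro a ⟨s, hs, hs'⟩
    refine ⟨-s, by simp [hs], ?_⟩
    have hneg : a⁻¹.toAdd.1 - -s * ℓ j = -(a.toAdd.1 - s * ℓ j) := by
      rw [toAdd_inv, Prod.fst_neg]
      ring
    exact hneg ▸ hs'.neg_right

/-- The free-by-abelian group receiving the extension. -/
abbrev HosoTarget (m ℓ : Fin h → ℕ) :=
  FreeGroup (Σ j, Multiplicative (ℤ × ℚ) ⧸ hosoEdge m ℓ j) ⋊[cosetAut (hosoEdge m ℓ)]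
    Multiplicative (ℤ × ℚ)

/-- The element of the abelian quotient of the target with the given coordinates. -/
def targetInr (m ℓ : Fin h → ℕ) (p : ℤ) (s : ℚ) : HosoTarget m ℓ :=
  inr (Multiplicative.ofAdd (p, s))

/-- The free generator attached to the trivial coset of the `j`-th edge group. -/
def targetE (m ℓ : Fin h → ℕ) (j : Fin h) : HosoTarget m ℓ :=
  inl (FreeGroup.of ⟨j, ((1 : Multiplicative (ℤ × ℚ)) : _ ⧸ hosoEdge m ℓ j)⟩)

/-- The image of `a_{j,0} ρ` in the target. -/
def targetX (m ℓ : Fin h → ℕ) (j : Fin h) : HosoTarget m ℓ :=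
  targetE m ℓ j * targetInr m ℓ 1 (1 / ℓ j) * (targetE m ℓ j)⁻¹

theorem targetInr_mul (p p' : ℤ) (s s' : ℚ) :
    targetInr m ℓ p s * targetInr m ℓ p' s' = targetInr m ℓ (p + p') (s + s') :=
  (map_mul inr _ _).symm

theorem targetInr_zpow (p : ℤ) (s : ℚ) (k : ℤ) :
    targetInr m ℓ p s ^ k = targetInr m ℓ (k * p) (k * s) := by
  rw [targetInr, ← map_zpow, ← ofAdd_zsmul, Prod.smul_mk, smul_eq_mul, zsmul_eq_mul, targetInr]

theorem commute_targetInr (p p' : ℤ) (s s' : ℚ) :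
    Commute (targetInr m ℓ p s) (targetInr m ℓ p' s') := by
  rw [commute_iff_eq, targetInr_mul, targetInr_mul, add_comm, add_comm s]

theorem commute_targetInr_targetE (j : Fin h) {p : ℤ} {s : ℤ} (hp : (m j : ℤ) ∣ p - s * ℓ j) :
    Commute (targetInr m ℓ p s) (targetE m ℓ j) := by
  have hmem : Multiplicative.ofAdd (p, (s : ℚ)) ∈ hosoEdge m ℓ j := ⟨s, rfl, hp⟩
  have h1 := inl_aut (φ := cosetAut (hosoEdge m ℓ)) (Multiplicative.ofAdd (p, (s : ℚ)))
    (FreeGroup.of ⟨j, ((1 : Multiplicative (ℤ × ℚ)) : _ ⧸ hosoEdge m ℓ j)⟩)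
  rw [cosetAut_of, mul_one, (QuotientGroup.eq_one_iff _).2 hmem, map_inv] at h1
  exact (eq_mul_inv_iff_mul_eq.1 h1).symm

theorem commute_targetInr_pow_targetX (j : Fin h) :
    Commute (targetInr m ℓ 1 0 ^ m j) (targetX m ℓ j) := by
  have h1 : targetInr m ℓ 1 0 ^ m j = targetInr m ℓ (m j) (0 : ℤ) := by
    rw [← zpow_natCast, targetInr_zpow]
    simp
  have h2 := commute_targetInr_targetE (m := m) (ℓ := ℓ) j (p := m j) (s := 0) (by simp)
  rw [h1]
  exact (h2.mul_right (commute_targetInr _ _ _ _)).mul_right h2.inv_right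

theorem targetX_zpow (j : Fin h) (u : ℤ) :
    targetX m ℓ j ^ u = targetE m ℓ j * targetInr m ℓ u (u / ℓ j) * (targetE m ℓ j)⁻¹ := by
  rw [targetX, conj_zpow, targetInr_zpow, mul_one, mul_one_div]

theorem targetX_pow (hℓ : ∀ j, 0 < ℓ j) (j : Fin h) :
    targetX m ℓ j ^ ℓ j = targetInr m ℓ (ℓ j) 1 := by
  have h0 : (ℓ j : ℚ) ≠ 0 := by exact_mod_cast (hℓ j).ne'
  have h1 := commute_targetInr_targetE (m := m) (ℓ := ℓ) j (p := ℓ j) (s := 1) (by simp)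
  rw [Int.cast_one] at h1
  rw [← zpow_natCast, targetX_zpow, Int.cast_natCast, div_self h0, ← h1.eq, mul_inv_cancel_right]

/-- The image of `a_{j,i}` in the target. -/
def targetGen (m ℓ : Fin h → ℕ) (x : Σ j : Fin h, ZMod (m j)) : HosoTarget m ℓ :=
  targetInr m ℓ 1 0 ^ (x.2.cast : ℤ) * targetX m ℓ x.1 *
    targetInr m ℓ 1 0 ^ (-1 - (x.2.cast : ℤ))

theorem targetGen_intCast (j : Fin h) (c : ℤ) :
    targetGen m ℓ ⟨j, (c : ZMod (m j))⟩ =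
      targetInr m ℓ 1 0 ^ c * targetX m ℓ j * targetInr m ℓ 1 0 ^ (-1 - c) :=
  conj_zpow_eq_of_zmod_eq (commute_targetInr_pow_targetX j) (ZMod.intCast_zmod_cast _)

theorem prod_targetGen (hℓ : ∀ j, 0 < ℓ j) (j : Fin h) (i : ZMod (m j)) :
    ((List.range (ℓ j)).map fun k : ℕ => targetGen m ℓ ⟨j, i + (k : ZMod (m j))⟩).prod =
      targetInr m ℓ 0 1 := by
  obtain ⟨c, rfl⟩ := ZMod.intCast_surjective i
  have h1 : ∀ k : ℕ, targetGen m ℓ ⟨j, (c : ZMod (m j)) + (k : ZMod (m j))⟩ =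
      targetInr m ℓ 1 0 ^ (c + k) * targetX m ℓ j * targetInr m ℓ 1 0 ^ (-1 - (c + k)) := by
    intro k
    rw [← targetGen_intCast]
    push_cast
    rfl
  simp only [h1]
  rw [prod_map_range_conj, targetX_pow hℓ, targetInr_zpow, targetInr_zpow, targetInr_mul,
    targetInr_mul]
  congr 1
  · ring
  · ring

/-- The homomorphism from the hosohedral-type group to the target. -/
def hosoToTarget (hℓ : ∀ j, 0 < ℓ j) : HosoGroup h m ℓ →* HosoTarget m ℓ :=
  hosoLift (targetGen m ℓ) fun j i j' i' => by rw [prod_targetGen hℓ, prod_targetGen hℓ]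

theorem hosoToTarget_gen (hℓ : ∀ j, 0 < ℓ j) (j : Fin h) (c : ℤ) :
    hosoToTarget hℓ (hosoGen h m ℓ j (c : ZMod (m j))) =
      targetInr m ℓ 1 0 ^ c * targetX m ℓ j * targetInr m ℓ 1 0 ^ (-1 - c) := by
  rw [← targetGen_intCast]
  exact hosoLift_gen _ _ _ _

theorem hosoToTarget_hosoDelta (hℓ : ∀ j, 0 < ℓ j) (j : Fin h) :
    hosoToTarget hℓ (hosoDelta h m ℓ j) = targetInr m ℓ 0 1 := by
  rw [hosoDelta, hosoS_eq_prod, map_list_prod, List.map_map, ← prod_targetGen hℓ j 0]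
  congr 2
  funext k
  exact hosoLift_gen _ _ _ _

/-- The homomorphism from the extension to the target. -/
def extToTarget (hm : ∀ j, 0 < m j) (hℓ : ∀ j, 0 < ℓ j) : HosoExt ℓ hm →* HosoTarget m ℓ :=
  SemidirectProduct.lift (hosoToTarget hℓ) (zpowersHom _ (targetInr m ℓ 1 0)) fun g =>
    hosoGroup_hom_ext fun j i => by
      obtain ⟨c, rfl⟩ := ZMod.intCast_surjective i
      have h1 : hosoShiftAut hm g (hosoGen h m ℓ j (c : ZMod (m j))) =
          hosoGen h m ℓ j ((c + g.toAdd : ℤ) : ZMod (m j)) := by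
        rw [hosoShiftAut_apply, hosoShift_gen, Int.cast_add]
      simp only [MonoidHom.comp_apply, MulEquiv.coe_toMonoidHom, MulAut.conj_apply,
        zpowersHom_apply]
      rw [h1, hosoToTarget_gen, hosoToTarget_gen, ← zpow_neg, add_comm c, zpow_add]
      simp only [mul_assoc]
      rw [← zpow_add]
      congr 4
      ring

theorem extToTarget_inl (hm : ∀ j, 0 < m j) (hℓ : ∀ j, 0 < ℓ j) (x : HosoGroup h m ℓ) :
    extToTarget hm hℓ (inl x) = hosoToTarget hℓ x :=
  lift_inl _ _ _ _

theorem extToTarget_extRho (hm : ∀ j, 0 < m j) (hℓ : ∀ j, 0 < ℓ j) :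
    extToTarget hm hℓ (extRho ℓ hm) = targetInr m ℓ 1 0 := by
  rw [extToTarget, extRho, lift_inr, zpowersHom_apply, toAdd_ofAdd, zpow_one]

theorem extToTarget_extX (hm : ∀ j, 0 < m j) (hℓ : ∀ j, 0 < ℓ j) (j : Fin h) :
    extToTarget hm hℓ (extX ℓ hm j) = targetX m ℓ j := by
  have h1 := hosoToTarget_gen (m := m) hℓ j 0
  rw [Int.cast_zero] at h1
  rw [extX, map_mul, extToTarget_inl, extToTarget_extRho, h1]
  simp

theorem targetInr_right (p : ℤ) (s : ℚ) :
    (targetInr m ℓ p s).right = Multiplicative.ofAdd (p, s) := rfl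

theorem extToTarget_zpow_extRho_mul_hosoDelta (hm : ∀ j, 0 < m j) (hℓ : ∀ j, 0 < ℓ j) (j : Fin h)
    (p q : ℤ) : extToTarget hm hℓ (extRho ℓ hm ^ p * inl (hosoDelta h m ℓ j) ^ q) =
      targetInr m ℓ p q := by
  rw [map_mul, map_zpow, map_zpow, extToTarget_inl, extToTarget_extRho, hosoToTarget_hosoDelta,
    targetInr_zpow, targetInr_zpow, targetInr_mul]
  simp

theorem extToTarget_zpow_extX_mul_extRho (hm : ∀ j, 0 < m j) (hℓ : ∀ j, 0 < ℓ j) (j : Fin h)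
    (u v : ℤ) : extToTarget hm hℓ (extX ℓ hm j ^ u * (extRho ℓ hm ^ m j) ^ v) =
      targetE m ℓ j * targetInr m ℓ (u + m j * v) (u / ℓ j) * (targetE m ℓ j)⁻¹ := by
  have h2 := commute_targetInr_targetE (m := m) (ℓ := ℓ) j (p := m j * v) (s := 0) (by simp)
  have h1 : (targetInr m ℓ 1 0 ^ m j) ^ v = targetInr m ℓ (m j * v) (0 : ℤ) := by
    rw [← zpow_natCast, ← zpow_mul, targetInr_zpow]
    simp
  rw [map_mul, map_zpow, map_zpow, map_pow, extToTarget_extRho, extToTarget_extX, targetX_zpow, h1,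
    mul_assoc, ← h2.inv_right.eq, ← mul_assoc, mul_assoc (targetE m ℓ j), targetInr_mul]
  simp

theorem extToTarget_injective (hm : ∀ j, 0 < m j) (hℓ : ∀ j, 0 < ℓ j) (j₀ : Fin h) :
    Function.Injective (extToTarget hm hℓ) := by
  have hright : ∀ j (q : HosoTarget m ℓ),
      (targetE m ℓ j * q * (targetE m ℓ j)⁻¹).right = q.right := by
    intro j q
    simp [targetE]
  have hΔρ : ∀ j (s t : ℤ), extX ℓ hm j ^ (s * ℓ j) * extRho ℓ hm ^ t =
      extRho ℓ hm ^ (s * ℓ j + t) * inl (hosoDelta h m ℓ j₀) ^ s := by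
    intro j s t
    have hc := commute_extRho_hosoDelta (ℓ := ℓ) hm j₀
    rw [mul_comm, zpow_mul, zpow_natCast, extX_pow hm j j₀, (hc.symm.zpow_right _).mul_zpow,
      ← zpow_mul, mul_assoc, ← zpow_add, (hc.zpow_zpow _ _).eq, mul_comm]
  refine injective_of_star (π := rightHom.comp (extToTarget hm hℓ))
    (A := Subgroup.zpowPair (extRho ℓ hm) (inl (hosoDelta h m ℓ j₀))
      (commute_extRho_hosoDelta hm j₀))
    (X := fun j => Subgroup.zpowPair (extX ℓ hm j) (extRho ℓ hm ^ m j)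
      (commute_extRho_pow_extX hm j).symm)
    (extToTarget hm hℓ) (fun _ => rfl) ?_ ?_ ?_ ?_ ?_ ?_
  · rw [eq_top_iff]
    rintro g -
    set K : Subgroup (HosoExt ℓ hm) := Subgroup.closure _
    have hρ : extRho ℓ hm ∈ K := Subgroup.subset_closure (Or.inl ⟨1, 0, by simp⟩)
    have hx : ∀ j, extX ℓ hm j ∈ K := fun j =>
      Subgroup.subset_closure (Or.inr (Set.mem_iUnion.2 ⟨j, 1, 0, by simp⟩))
    have hinl : ∀ x : HosoGroup h m ℓ, (inl x : HosoExt ℓ hm) ∈ K :=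
      PresentedGroup.generated_by (hosoRels h m ℓ) (K.comap inl) fun y => by
        obtain ⟨j, i⟩ := y
        obtain ⟨c, rfl⟩ := ZMod.intCast_surjective i
        have h1 := inl_hosoGen (ℓ := ℓ) hm j c
        rw [Subgroup.mem_comap]
        rw [hosoGen] at h1
        rw [h1]
        exact K.mul_mem (K.mul_mem (K.zpow_mem hρ _) (hx j)) (K.zpow_mem hρ _)
    rw [← inl_left_mul_inr_right g]
    refine K.mul_mem (hinl _) ?_
    rw [← ofAdd_toAdd g.right, ← extRho_zpow]
    exact K.zpow_mem hρ _
  · rintro _ ⟨p, q, rfl⟩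
    rw [MonoidHom.comp_apply, extToTarget_zpow_extRho_mul_hosoDelta]
    rfl
  · rintro j _ ⟨u, v, rfl⟩
    rw [MonoidHom.comp_apply, extToTarget_zpow_extX_mul_extRho, rightHom_eq_right, hright]
    rfl
  · rintro j _ ⟨u, v, rfl⟩ hmem
    rw [MonoidHom.comp_apply, extToTarget_zpow_extX_mul_extRho, rightHom_eq_right, hright] at hmem
    obtain ⟨s, hs, -⟩ := hmem
    have h0 : (ℓ j : ℚ) ≠ 0 := by exact_mod_cast (hℓ j).ne'
    have hu : u = s * ℓ j := by exact_mod_cast (div_eq_iff h0).1 hs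
    refine ⟨s * ℓ j + m j * v, s, ?_⟩
    rw [hu, ← hΔρ, zpow_mul (extRho ℓ hm) (m j), zpow_natCast]
  · rintro j _ ⟨p, q, rfl⟩ hmem
    rw [MonoidHom.comp_apply, extToTarget_zpow_extRho_mul_hosoDelta] at hmem
    obtain ⟨s, hs, t, ht⟩ := hmem
    change (q : ℚ) = s at hs
    obtain rfl : q = s := by exact_mod_cast hs
    change p - q * ℓ j = m j * t at ht
    obtain rfl : p = q * ℓ j + m j * t := by lia
    refine ⟨q * ℓ j, t, ?_⟩
    rw [← hΔρ, zpow_mul (extRho ℓ hm) (m j), zpow_natCast]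
  · rintro _ ⟨p, q, rfl⟩ h1
    rw [MonoidHom.comp_apply, extToTarget_zpow_extRho_mul_hosoDelta] at h1
    have h2 : (p, (q : ℚ)) = 0 := Multiplicative.ofAdd.injective h1
    obtain ⟨hp, hq⟩ := Prod.mk.inj h2
    obtain rfl : q = 0 := by exact_mod_cast hq
    simp [hp]

theorem hosoToTarget_injective (hm : ∀ j, 0 < m j) (hℓ : ∀ j, 0 < ℓ j) (j₀ : Fin h) :
    Function.Injective (hosoToTarget (m := m) hℓ) := by
  have h1 := (extToTarget_injective hm hℓ j₀).comp inl_injective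
  exact fun x y hxy => h1 (by simpa [extToTarget_inl] using hxy)

/-- The hosohedral-type group has degree zero in the shift direction. -/
theorem hosoToTarget_right_fst (hℓ : ∀ j, 0 < ℓ j) (x : HosoGroup h m ℓ) :
    (hosoToTarget hℓ x).right.toAdd.1 = 0 := by
  have : ((AddMonoidHom.fst ℤ ℚ).toMultiplicative.comp
      ((rightHom (φ := cosetAut (hosoEdge m ℓ))).comp (hosoToTarget hℓ))) = 1 := by
    refine hosoGroup_hom_ext fun j i => ?_
    obtain ⟨c, rfl⟩ := ZMod.intCast_surjective i
    simp [hosoToTarget_gen, targetX, targetE, targetInr_zpow, targetInr_right, ← ofAdd_add, -ofAdd_sub]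
    ring
  exact congrArg Multiplicative.toAdd (DFunLike.congr_fun this x)

end Hoso

/-- Uniqueness of roots up to conjugacy in hosohedral-type groups: if `α^n = β^n` for a nonzero
integer `n`, then either `α` and `β` are conjugate, or they are nonconjugate periodic
elements. -/
theorem roots_conjugate_hosohedral (h : ℕ) (m ℓ : Fin h → ℕ) (hh : 0 < h)
    (hm : ∀ j, 0 < m j) (hℓ : ∀ j, 0 < ℓ j) (hne : ∀ j, (m j, ℓ j) ≠ (1, 1))
    (α β : HosoGroup h m ℓ) (n : ℤ) (hn : n ≠ 0) (hab : α ^ n = β ^ n) :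
    IsConj α β ∨
      (HosoIsPeriodic h m ℓ hh α ∧ HosoIsPeriodic h m ℓ hh β ∧ ¬ IsConj α β) := by
  have hinj := hosoToTarget_injective (m := m) hm hℓ ⟨0, hh⟩
  set Δ := hosoDelta h m ℓ ⟨0, hh⟩ with hΔ
  set N := ∏ j, m j with hN
  have hN0 : N ≠ 0 := Finset.prod_ne_zero_iff.2 fun j _ => (hm j).ne'
  have hcent : ∀ x, Commute (Δ ^ N) x := fun x =>
    commute_hosoDelta_pow hm _ (fun j => Finset.dvd_prod_of_mem m (Finset.mem_univ j)) x
  obtain ⟨r, hr⟩ : ∃ r : ℚ, (hosoToTarget hℓ α).right = Multiplicative.ofAdd ((0 : ℤ), r) :=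
    ⟨_, Multiplicative.toAdd.injective (Prod.ext (hosoToTarget_right_fst hℓ α) rfl)⟩
  set w := (α ^ n) ^ ((N : ℤ) * r.den) * (Δ ^ N) ^ (-(r.num * n)) with hw
  have hpow : ∀ γ, γ ^ n = α ^ n → Commute γ w := fun γ hγ => by
    rw [hw, ← hγ]
    exact (((Commute.refl γ).zpow_right _).zpow_right _).mul_right
      ((hcent γ).symm.zpow_right _)
  by_cases hw1 : w = 1
  · have hper : ∀ γ, γ ^ n = α ^ n → HosoIsPeriodic h m ℓ hh γ := fun γ hγ => by
      refine ⟨n * (N * r.den), mul_ne_zero hn (mul_ne_zero (by exact_mod_cast hN0)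
        (by exact_mod_cast r.den_nz)), N * (r.num * n), ?_⟩
      rw [hw, zpow_neg, mul_inv_eq_one] at hw1
      rw [zpow_mul, hγ, hw1, ← hΔ, zpow_mul Δ, zpow_natCast]
    by_cases hc : IsConj α β
    · exact Or.inl hc
    · exact Or.inr ⟨hper α rfl, hper β hab.symm, hc⟩
  · left
    have hwr : (hosoToTarget hℓ w).right = 1 := by
      have h1 : rightHom (hosoToTarget hℓ α) = Multiplicative.ofAdd ((0 : ℤ), r) := hr
      have h2 : rightHom (hosoToTarget hℓ Δ) = Multiplicative.ofAdd ((0 : ℤ), (1 : ℚ)) := by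
        rw [hΔ, hosoToTarget_hosoDelta]
        rfl
      rw [← rightHom_eq_right, hw]
      simp only [map_mul, map_zpow, map_pow, h1, h2]
      simp only [← ofAdd_zsmul, ← ofAdd_nsmul, ← ofAdd_add, ofAdd_eq_one, Prod.smul_mk,
        Prod.mk_add_mk, smul_zero, add_zero, zsmul_eq_mul, nsmul_eq_mul, mul_one]
      refine Prod.ext rfl ?_
      have := Rat.mul_den_eq_num r
      push_cast
      simp only [Prod.snd_zero]
      linear_combination (N : ℚ) * n * this
    have hwl : hosoToTarget hℓ w = inl (hosoToTarget hℓ w).left := by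
      conv_lhs => rw [← inl_left_mul_inr_right (hosoToTarget hℓ w), hwr, map_one, mul_one]
    have hne1 : (hosoToTarget hℓ w).left ≠ 1 := by
      intro h0
      rw [h0, map_one] at hwl
      exact hw1 (hinj (hwl.trans (map_one _).symm))
    have himg : ∀ γ, γ ^ n = α ^ n →
        Commute (hosoToTarget hℓ γ) (inl (hosoToTarget hℓ w).left) := fun γ hγ => by
      rw [← hwl]
      exact (hpow γ hγ).map (hosoToTarget hℓ)
    have hαβ : α = β := hinj (SemidirectProduct.eq_of_zpow_eq_of_commute hn
      (by rw [← map_zpow, ← map_zpow, hab]) hne1 (himg α rfl) (himg β hab.symm))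
    rw [hαβ]
end

section
/- Let G be the hosohedral-type group associated to pairs (m_1,ℓ_1),…,(m_h,ℓ_h), and for each j set d_j = gcd(m_j,ℓ_j). Then the abelianization of G is isomorphic to ℤ^r × T for some finite abelian group T, where r = 1 + Σ_{j=1}^h (d_j − 1); that is, the free part of G^{ab} has rank 1 + Σ_{j=1}^h (d_j − 1). -/
open Finset in
/-- The sums of `ℓ` consecutive values of `f` starting at `i` and at `i + 1` agree exactly when
`f (i + ℓ) = f i`. -/
theorem sum_range_shift_eq_iff {R A : Type*} [CommRing R] [AddCommGroup A] (f : R → A) (ℓ : ℕ)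
    (i : R) :
    ∑ k ∈ range ℓ, f (i + (k : R)) = ∑ k ∈ range ℓ, f (i + 1 + (k : R)) ↔ f (i + ℓ) = f i := by
  have key : ∑ k ∈ range ℓ, f (i + (k : R)) + f (i + ℓ)
      = ∑ k ∈ range ℓ, f (i + 1 + (k : R)) + f i := by
    rw [← sum_range_succ (fun k : ℕ => f (i + (k : R))), sum_range_succ']
    congr 1
    · exact sum_congr rfl fun k _ => by rw [Nat.cast_succ, add_assoc, add_comm (1 : R)]
    · simp
  constructor <;> intro hs
  · rw [hs] at key
    exact add_left_cancel key
  · rw [hs] at key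
    exact add_right_cancel key

theorem periodic_gcd {A : Type*} {m ℓ : ℕ} {f : ZMod m → A}
    (hf : Function.Periodic f (ℓ : ZMod m)) :
    Function.Periodic f ((Nat.gcd m ℓ : ℕ) : ZMod m) := by
  have hd : ((Nat.gcd m ℓ : ℕ) : ZMod m) = Nat.gcdB m ℓ • (ℓ : ZMod m) := by
    have := congrArg (Int.cast : ℤ → ZMod m) (Nat.gcd_eq_gcd_ab m ℓ)
    push_cast at this
    rw [this]
    simp [mul_comm]
  rw [hd]
  exact hf.zsmul _

theorem Function.Periodic.apply_val_mod {A : Type*} {m d : ℕ} [NeZero m] {f : ZMod m → A}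
    (hf : Function.Periodic f (d : ZMod m)) (i : ZMod m) : f ((i.val % d : ℕ) : ZMod m) = f i := by
  conv_rhs => rw [← ZMod.natCast_zmod_val i, ← Nat.mod_add_div i.val d]
  have := (hf.nsmul (i.val / d)) ((i.val % d : ℕ) : ZMod m)
  rw [← this]
  simp [mul_comm]

open Finset in
theorem Function.Periodic.sum_range_mul {A : Type*} [AddCommMonoid A] {g : ℕ → A} {d : ℕ}
    (hg : Function.Periodic g d) (k : ℕ) :
    ∑ c ∈ range (d * k), g c = k • ∑ c ∈ range d, g c := by
  induction k with
  | zero => simp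
  | succ k ih =>
    rw [Nat.mul_succ, sum_range_add, ih, succ_nsmul]
    congr 1
    refine sum_congr rfl fun c _ => ?_
    have := (hg.nsmul k) c
    rw [← this, smul_eq_mul, mul_comm, add_comm]

theorem finrank_le_of_comp_eq_nsmul {A B : Type*} [AddCommGroup A] [AddCommGroup B]
    [Module.Finite ℤ B] (f : A →+ B) (g : B →+ A) {N : ℕ} (hN : N ≠ 0)
    (h : ∀ a, g (f a) = N • a) : Module.finrank ℤ A ≤ Module.finrank ℤ B := by
  let F := f.toIntLinearMap
  have hker : LinearMap.ker F ≤ Submodule.torsion ℤ A := by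
    intro a ha
    have ha' : f a = 0 := ha
    refine (Submodule.mem_torsion_iff a).2 ⟨⟨(N : ℤ), by simpa using hN⟩, ?_⟩
    have := h a
    rw [ha', map_zero] at this
    rw [Submonoid.smul_def]
    simpa using this.symm
  have hr := rank_quotient_eq_of_le_torsion hker
  calc Module.finrank ℤ A = Module.finrank ℤ (A ⧸ LinearMap.ker F) := by
        rw [Module.finrank, Module.finrank, hr]
    _ = Module.finrank ℤ (LinearMap.range F) := F.quotKerEquivRange.finrank_eq
    _ ≤ Module.finrank ℤ B := Submodule.finrank_le _

theorem finrank_eq_of_comp_eq_nsmul {A B : Type*} [AddCommGroup A] [AddCommGroup B]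
    [Module.Finite ℤ A] [Module.Finite ℤ B] (f : A →+ B) (g : B →+ A) {N : ℕ} (hN : N ≠ 0)
    (hgf : ∀ a, g (f a) = N • a) (hfg : ∀ b, f (g b) = N • b) :
    Module.finrank ℤ A = Module.finrank ℤ B :=
  le_antisymm (finrank_le_of_comp_eq_nsmul f g hN hgf) (finrank_le_of_comp_eq_nsmul g f hN hfg)

/-- A finitely generated commutative group is a product of `ℤ ^ r`, where `r` is its rank, and a
finite group. -/
theorem CommGroup.exists_mulEquiv_int_prod_finite (G : Type*) [CommGroup G] [Group.FG G] :
    ∃ (T : Type) (_ : CommGroup T) (_ : Finite T),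
      Nonempty (G ≃* Multiplicative (Fin (Module.finrank ℤ (Additive G)) → ℤ) × T) := by
  obtain ⟨n, ι, _, p, hp, e, ⟨E⟩⟩ := AddCommGroup.equiv_free_prod_directSum_zmod (Additive G)
  classical
  have (i : ι) : NeZero (p i ^ e i) := ⟨pow_ne_zero _ (hp i).ne_zero⟩
  let T := (i : ι) → ZMod (p i ^ e i)
  let E' : Additive G ≃+ (Fin n → ℤ) × T := E.trans
    (AddEquiv.prodCongr (Finsupp.linearEquivFunOnFinite ℤ ℤ (Fin n)).toAddEquiv
      (DirectSum.addEquivProd _))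
  have : Module.Finite ℤ (Additive G) := Module.Finite.iff_addGroup_fg.2 inferInstance
  have hn : Module.finrank ℤ (Additive G) = n := by
    rw [finrank_eq_of_comp_eq_nsmul (B := Fin n → ℤ) (N := Nat.card T)
      ((AddMonoidHom.fst _ _).comp E'.toAddMonoidHom)
      (Nat.card T • E'.symm.toAddMonoidHom.comp (AddMonoidHom.inl _ _)) Nat.card_pos.ne' ?_ ?_]
    · simp
    · intro a
      apply E'.injective
      have hT : Nat.card T • (E' a).2 = 0 := card_nsmul_eq_zero'
      ext1
      · simp
      · rw [map_nsmul, Prod.smul_snd, hT]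
        simp
    · intro b
      simp
  rw [hn]
  exact ⟨Multiplicative T, inferInstance, inferInstanceAs (Finite T),
    ⟨(AddEquiv.toMultiplicativeRight E').trans (MulEquiv.prodMultiplicative _ _)⟩⟩

section Hoso

variable {h : ℕ} {m ℓ : Fin h → ℕ}

theorem map_hosoWord {H : Type*} [CommGroup H] (φ : FreeGroup (Σ j : Fin h, ZMod (m j)) →* H)
    (j : Fin h) (i : ZMod (m j)) (p : ℕ) :
    φ (hosoWord h m j i p)
      = ∏ k ∈ Finset.range p, φ (FreeGroup.of ⟨j, i + (k : ZMod (m j))⟩) := by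
  induction p with
  | zero => simp [hosoWord]
  | succ p ih =>
    rw [Finset.prod_range_succ, ← ih]
    simp [hosoWord, List.range_succ]

/-- The class of the generator `a_{j,i}` in the abelianization, written additively. -/
def hosoAbGen (m ℓ : Fin h → ℕ) (j : Fin h) (i : ZMod (m j)) :
    Additive (Abelianization (HosoGroup h m ℓ)) :=
  Additive.ofMul (Abelianization.of (hosoGen h m ℓ j i))

theorem ofMul_of_mk_hosoWord (j : Fin h) (i : ZMod (m j)) (p : ℕ) :
    Additive.ofMul (Abelianization.of (PresentedGroup.mk (hosoRels h m ℓ) (hosoWord h m j i p)))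
      = ∑ k ∈ Finset.range p, hosoAbGen m ℓ j (i + (k : ZMod (m j))) := by
  have := map_hosoWord (Abelianization.of.comp (PresentedGroup.mk (hosoRels h m ℓ))) j i p
  rw [MonoidHom.comp_apply] at this
  rw [this, ofMul_prod]
  rfl

theorem mk_hosoWord_eq_of_mem {j j' : Fin h} {i : ZMod (m j)} {i' : ZMod (m j')} {p p' : ℕ}
    (hr : hosoWord h m j i p * (hosoWord h m j' i' p')⁻¹ ∈ hosoRels h m ℓ) :
    PresentedGroup.mk (hosoRels h m ℓ) (hosoWord h m j i p)
      = PresentedGroup.mk (hosoRels h m ℓ) (hosoWord h m j' i' p') := by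
  have := PresentedGroup.one_of_mem hr
  rwa [map_mul, map_inv, mul_inv_eq_one] at this

theorem hosoAbGen_periodic (j : Fin h) :
    Function.Periodic (hosoAbGen m ℓ j) ((Nat.gcd (m j) (ℓ j) : ℕ) : ZMod (m j)) := by
  refine periodic_gcd fun i => (sum_range_shift_eq_iff _ _ _).1 ?_
  rw [← ofMul_of_mk_hosoWord, ← ofMul_of_mk_hosoWord,
    mk_hosoWord_eq_of_mem (Or.inl ⟨j, i, rfl⟩)]

theorem sum_hosoAbGen_eq (j j' : Fin h) :
    ∑ k ∈ Finset.range (ℓ j), hosoAbGen m ℓ j (k : ZMod (m j))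
      = ∑ k ∈ Finset.range (ℓ j'), hosoAbGen m ℓ j' (k : ZMod (m j')) := by
  have hz (j : Fin h) := ofMul_of_mk_hosoWord (ℓ := ℓ) (m := m) j 0 (ℓ j)
  simp only [zero_add] at hz
  rw [← hz, ← hz, mk_hosoWord_eq_of_mem (Or.inr ⟨j, j', rfl⟩)]

theorem exists_hosoAb_lift {V : Type*} [AddCommGroup V] (f : (j : Fin h) → ZMod (m j) → V)
    (hper : ∀ j, Function.Periodic (f j) (ℓ j : ZMod (m j)))
    (hsum : ∀ j j', ∑ k ∈ Finset.range (ℓ j), f j (k : ZMod (m j))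
      = ∑ k ∈ Finset.range (ℓ j'), f j' (k : ZMod (m j'))) :
    ∃ φ : Additive (Abelianization (HosoGroup h m ℓ)) →+ V,
      ∀ j i, φ (hosoAbGen m ℓ j i) = f j i := by
  let F : (Σ j : Fin h, ZMod (m j)) → Multiplicative V := fun x => Multiplicative.ofAdd (f x.1 x.2)
  have hF : ∀ r ∈ hosoRels h m ℓ, FreeGroup.lift F r = 1 := by
    rintro r (⟨j, i, rfl⟩ | ⟨j, j', rfl⟩)
    · rw [map_mul, map_inv, mul_inv_eq_one, map_hosoWord, map_hosoWord]
      simp only [FreeGroup.lift_apply_of, F, ← ofAdd_sum]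
      rw [(sum_range_shift_eq_iff (f j) (ℓ j) i).2 (hper j i)]
    · rw [map_mul, map_inv, mul_inv_eq_one, map_hosoWord, map_hosoWord]
      simp only [FreeGroup.lift_apply_of, F, ← ofAdd_sum, zero_add]
      rw [hsum j j']
  refine ⟨MonoidHom.toAdditiveLeft (Abelianization.lift (PresentedGroup.toGroup hF)), fun j i => ?_⟩
  simp [hosoAbGen, hosoGen, F]

theorem hosoAb_hom_ext {B : Type*} [AddCommGroup B]
    {φ ψ : Additive (Abelianization (HosoGroup h m ℓ)) →+ B}
    (hg : ∀ j i, φ (hosoAbGen m ℓ j i) = ψ (hosoAbGen m ℓ j i)) : φ = ψ := by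
  apply MonoidHom.toAdditiveLeft.symm.injective
  apply Abelianization.hom_ext
  apply PresentedGroup.ext
  rintro ⟨j, i⟩
  exact congrArg Multiplicative.ofAdd (hg j i)

theorem hosoAb_fg (hm : ∀ j, 0 < m j) : Group.FG (Abelianization (HosoGroup h m ℓ)) := by
  have (j : Fin h) : NeZero (m j) := ⟨(hm j).ne'⟩
  have : Group.FG (HosoGroup h m ℓ) :=
    Group.fg_of_surjective (PresentedGroup.mk_surjective (hosoRels h m ℓ))
  exact Group.fg_of_surjective (f := Abelianization.of) QuotientGroup.mk_surjective

theorem sum_hosoAbGen_eq_nsmul (j : Fin h) {k : ℕ} (hk : ℓ j = Nat.gcd (m j) (ℓ j) * k) :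
    ∑ c ∈ Finset.range (ℓ j), hosoAbGen m ℓ j (c : ZMod (m j))
      = k • ∑ c ∈ Finset.range (Nat.gcd (m j) (ℓ j)), hosoAbGen m ℓ j (c : ZMod (m j)) := by
  have hper : Function.Periodic (fun c : ℕ => hosoAbGen m ℓ j (c : ZMod (m j)))
      (Nat.gcd (m j) (ℓ j)) := fun c => by
    simpa using hosoAbGen_periodic (ℓ := ℓ) j (c : ZMod (m j))
  rw [← hper.sum_range_mul, ← hk]

theorem finrank_hosoAb (hh : 0 < h) (hm : ∀ j, 0 < m j) (hℓ : ∀ j, 0 < ℓ j) :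
    Module.finrank ℤ (Additive (Abelianization (HosoGroup h m ℓ)))
      = 1 + ∑ j : Fin h, (Nat.gcd (m j) (ℓ j) - 1) := by
  have hne (j : Fin h) : NeZero (m j) := ⟨(hm j).ne'⟩
  have : Group.FG (Abelianization (HosoGroup h m ℓ)) := hosoAb_fg hm
  have : Module.Finite ℤ (Additive (Abelianization (HosoGroup h m ℓ))) :=
    Module.Finite.iff_addGroup_fg.2 inferInstance
  let d : Fin h → ℕ := fun j => Nat.gcd (m j) (ℓ j)
  have hd (j : Fin h) : d j - 1 + 1 = d j :=
    Nat.sub_add_cancel (Nat.gcd_pos_of_pos_left _ (hm j))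
  choose k hk using fun j => Nat.gcd_dvd_right (m j) (ℓ j)
  let N : ℕ := ∏ j, k j
  have hN : N ≠ 0 := Finset.prod_ne_zero_iff.2 fun j _ hj => (hℓ j).ne' (by rw [hk j, hj, mul_zero])
  choose q hq using fun j => Finset.dvd_prod_of_mem k (Finset.mem_univ j)
  let V := ℤ × ((Σ j, Fin (d j - 1)) → ℤ)
  let e : (Σ j, Fin (d j - 1)) → V := fun x => (0, Pi.single x (N : ℤ))
  let β : Fin h → ℕ → V := fun j c =>
    if hc : c < d j - 1 then e ⟨j, c, hc⟩ else ((q j : ℤ), 0) - ∑ c : Fin (d j - 1), e ⟨j, c⟩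
  have hβ_lt (j : Fin h) (c : Fin (d j - 1)) : β j c = e ⟨j, c⟩ := by simp [β]
  have hβ_last (j : Fin h) : β j (d j - 1) = ((q j : ℤ), 0) - ∑ c : Fin (d j - 1), e ⟨j, c⟩ := by
    simp [β]
  have hβ_sum (j : Fin h) : ∑ c ∈ Finset.range (d j), β j c = ((q j : ℤ), 0) := by
    rw [← hd j, Finset.sum_range_succ, Finset.sum_range, hβ_last]
    simp only [hβ_lt]
    abel
  let f : (j : Fin h) → ZMod (m j) → V := fun j i => β j (i.val % d j)
  have hf_cast (j : Fin h) (c : ℕ) : f j (c : ZMod (m j)) = β j (c % d j) := by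
    simp only [f, ZMod.val_natCast]
    rw [Nat.mod_mod_of_dvd _ (Nat.gcd_dvd_left _ _)]
  have hf_per (j : Fin h) : Function.Periodic (f j) (ℓ j : ZMod (m j)) := by
    intro i
    rw [← ZMod.natCast_zmod_val i, ← Nat.cast_add, hf_cast, hf_cast,
      Nat.add_mod, Nat.mod_eq_zero_of_dvd (Nat.gcd_dvd_right (m j) (ℓ j)), add_zero, Nat.mod_mod]
  have hf_sum (j : Fin h) :
      ∑ c ∈ Finset.range (ℓ j), f j (c : ZMod (m j)) = ((N : ℤ), 0) := by
    have hper : Function.Periodic (fun c : ℕ => β j (c % d j)) (d j) := fun c => by simp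
    simp only [hf_cast]
    rw [hk j, hper.sum_range_mul, Finset.sum_congr rfl fun c hc => by
      rw [Nat.mod_eq_of_lt (Finset.mem_range.1 hc)], hβ_sum,
      show N = k j * q j from hq j]
    ext <;> simp [V]
  obtain ⟨φ, hφ⟩ := exists_hosoAb_lift f hf_per fun j j' => by rw [hf_sum, hf_sum]
  let j₀ : Fin h := ⟨0, hh⟩
  let Δ := ∑ c ∈ Finset.range (ℓ j₀), hosoAbGen m ℓ j₀ (c : ZMod (m j₀))
  have hφΔ : φ Δ = ((N : ℤ), 0) := by
    rw [map_sum, ← hf_sum j₀]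
    exact Finset.sum_congr rfl fun c _ => hφ _ _
  have hφ_gen (x : Σ j, Fin (d j - 1)) : φ (hosoAbGen m ℓ x.1 ((x.2 : ℕ) : ZMod (m x.1))) = e x := by
    rw [hφ, hf_cast, Nat.mod_eq_of_lt (by have := x.2.2; omega), hβ_lt]
  let ψ : V →ₗ[ℤ] Additive (Abelianization (HosoGroup h m ℓ)) :=
    (LinearMap.toSpanSingleton ℤ _ Δ).coprod
      (Fintype.linearCombination ℤ fun x : Σ j, Fin (d j - 1) =>
        hosoAbGen m ℓ x.1 ((x.2 : ℕ) : ZMod (m x.1)))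
  have hψ (b : V) : ψ b = b.1 • Δ + ∑ x, b.2 x • hosoAbGen m ℓ x.1 ((x.2 : ℕ) : ZMod (m x.1)) :=
    rfl
  have hψ_e (x : Σ j, Fin (d j - 1)) :
      ψ (e x) = N • hosoAbGen m ℓ x.1 ((x.2 : ℕ) : ZMod (m x.1)) := by
    rw [hψ, Finset.sum_eq_single x (fun y _ hy => by simp [e, hy]) (by simp)]
    simp [e]
  have hψ_fst (n : ℕ) : ψ ((n : ℤ), 0) = n • Δ := by
    simp [hψ]
  have hψβ (j : Fin h) (c : ℕ) (hc : c < d j) :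
      ψ (β j c) = N • hosoAbGen m ℓ j (c : ZMod (m j)) := by
    rcases Nat.lt_or_ge c (d j - 1) with hlt | hge
    · rw [hβ_lt j ⟨c, hlt⟩, hψ_e]
    · obtain rfl : c = d j - 1 := by omega
      have hΔ : Δ = k j • ∑ c ∈ Finset.range (d j), hosoAbGen m ℓ j (c : ZMod (m j)) :=
        (sum_hosoAbGen_eq j₀ j).trans (sum_hosoAbGen_eq_nsmul j (hk j))
      have hsplit : ∑ c ∈ Finset.range (d j), hosoAbGen m ℓ j (c : ZMod (m j))
          = ∑ c : Fin (d j - 1), hosoAbGen m ℓ j ((c : ℕ) : ZMod (m j))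
            + hosoAbGen m ℓ j ((d j - 1 : ℕ) : ZMod (m j)) := by
        rw [← Finset.sum_range fun c : ℕ => hosoAbGen m ℓ j (c : ZMod (m j)),
          ← Finset.sum_range_succ fun c : ℕ => hosoAbGen m ℓ j (c : ZMod (m j)), hd j]
      rw [hβ_last, map_sub, map_sum, hψ_fst, hΔ, ← mul_nsmul, ← hq j,
        hsplit, nsmul_add, Finset.smul_sum]
      simp only [hψ_e]
      exact add_sub_cancel_left _ _
  have hrank := finrank_eq_of_comp_eq_nsmul φ ψ.toAddMonoidHom hN
    (fun a => DFunLike.congr_fun (hosoAb_hom_ext (φ := ψ.toAddMonoidHom.comp φ)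
      (ψ := nsmulAddMonoidHom N) fun j i => by
        have hlt : i.val % d j < d j := Nat.mod_lt _ (Nat.gcd_pos_of_pos_left _ (hm j))
        have := hψβ j _ hlt
        rw [(hosoAbGen_periodic j).apply_val_mod i] at this
        simpa [hφ] using this) a)
    (fun b => by
      obtain ⟨x, v⟩ := b
      simp only [LinearMap.toAddMonoidHom_coe, hψ, map_add, map_sum, map_zsmul, hφΔ, hφ_gen, e]
      ext y
      · simp [V, Prod.fst_sum, mul_comm]
      · simp [V, Prod.snd_sum, Finset.sum_apply, Pi.single_apply, mul_comm])
  rw [hrank]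
  simp [V, d]

end Hoso

/-- The free part of the abelianization of a hosohedral-type group has rank
`1 + ∑ j (gcd(m_j, ℓ_j) - 1)`. -/
theorem abelianization_hosohedral (h : ℕ) (m ℓ : Fin h → ℕ) (hh : 0 < h)
    (hm : ∀ j, 0 < m j) (hℓ : ∀ j, 0 < ℓ j) (hne : ∀ j, (m j, ℓ j) ≠ (1, 1)) :
    ∃ (T : Type) (_ : CommGroup T) (_ : Finite T),
      Nonempty (Abelianization (HosoGroup h m ℓ) ≃*
        Multiplicative (Fin (1 + ∑ j : Fin h, (Nat.gcd (m j) (ℓ j) - 1)) → ℤ) × T) := by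
  have : Group.FG (Abelianization (HosoGroup h m ℓ)) := hosoAb_fg hm
  rw [← finrank_hosoAb hh hm hℓ]
  exact CommGroup.exists_mulEquiv_int_prod_finite _
end
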